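/- arXiv:1512.01758 — 2 statements merged into one kernel-verified Lean document; each statement's English description precedes it below -/
import Mathlib

section
/- Let V : Ω × ℝ^{dT} → ℝ ∪ {−∞} be a normal integrand market model satisfying the no-arbitrage condition NA, and let f ∈ L^0(𝓕;ℝ). Then there exists a finite 𝓕-measurable random variable M_f : Ω → ℝ such that every superhedgeable claim g ∈ 𝒞_f = { g ∈ L^0(𝓕;ℝ) : ∃ϑ ∈ 𝒜 with V(·,ϑ(·)) ≥ g ≥ f a.s. } satisfies g ≤ M_f almost surely. -/
open MeasureTheory Filter Topology
open scoped ENNReal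

noncomputable section

/-- A strategy `ϑ` is adapted to the filtration `ℱ`. -/
def AdaptedStrat {Ω : Type*} {T d : ℕ} (ℱ : Fin T → MeasurableSpace Ω)
    (ϑ : Ω → Fin T → Fin d → ℝ) : Prop :=
  ∀ t : Fin T, Measurable[ℱ t] fun ω => ϑ ω t

/-- The hypographical correspondence of `V` is closed valued and measurable. -/
def HypoClosedMeas {Ω : Type*} {mΩ : MeasurableSpace Ω} {T d : ℕ}
    (V : Ω → (Fin T → Fin d → ℝ) → EReal) : Prop :=
  (∀ ω, IsClosed {xb : (Fin T → Fin d → ℝ) × ℝ | (xb.2 : EReal) ≤ V ω xb.1}) ∧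
  (∀ (c : (Fin T → Fin d → ℝ) × ℝ) (s : ℝ),
    MeasurableSet {ω | (Metric.ball c s ∩
      {xb : (Fin T → Fin d → ℝ) × ℝ | (xb.2 : EReal) ≤ V ω xb.1}).Nonempty})

/-- The recession market model
`V^∞(ω,z) = lim_{λ→∞} sup { (1/δ)·V(ω,δx) : δ > λ, |x−z| < 1/λ }`; since the inner
supremum is antitone in `λ`, the limit equals the infimum over `λ > 0`. -/
def recessionModel {Ω : Type*} {T d : ℕ} (V : Ω → (Fin T → Fin d → ℝ) → EReal)
    (ω : Ω) (z : Fin T → Fin d → ℝ) : EReal :=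
  ⨅ l : {l : ℝ // 0 < l}, ⨆ δ : {δ : ℝ // l.1 < δ},
    ⨆ x : {x : Fin T → Fin d → ℝ // ‖x - z‖ < 1 / l.1},
      (((δ.1)⁻¹ : ℝ) : EReal) * V ω (δ.1 • x.1)

/-- The no-arbitrage condition NA: the only adapted strategy `ϑ` with
`V^∞(·,ϑ(·)) ≥ 0` a.s. is `ϑ = 0`. -/
def NAcond {Ω : Type*} {mΩ : MeasurableSpace Ω} {T d : ℕ} (P : Measure Ω)
    (ℱ : Fin T → MeasurableSpace Ω) (V : Ω → (Fin T → Fin d → ℝ) → EReal) : Prop :=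
  ∀ ϑ, AdaptedStrat ℱ ϑ → (∀ᵐ ω ∂P, 0 ≤ recessionModel V ω (ϑ ω)) →
    ∀ᵐ ω ∂P, ϑ ω = 0

/-- Evaluating a sequence of measurable functions at a measurable random index. -/
lemma measurable_randomIndex {Ω β : Type*} {m : MeasurableSpace Ω} [MeasurableSpace β]
    {y : ℕ → Ω → β} (hy : ∀ k, Measurable (y k)) {σ : Ω → ℕ} (hσ : Measurable σ) :
    Measurable fun ω => y (σ ω) ω :=
  (measurable_from_prod_countable_right (f := fun p : ℕ × Ω => y p.1 p.2) hy).comp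
    (hσ.prodMk measurable_id)

/-- A measurable family of scalar sequences converges to its upper limit along a measurable random
subsequence, wherever it is bounded. -/
lemma exists_measurable_subseq_tendsto_limsup {Ω : Type*} {m : MeasurableSpace Ω}
    (y : ℕ → Ω → ℝ) (hy : ∀ k, Measurable (y k)) :
    ∃ σ : ℕ → Ω → ℕ, (∀ k, Measurable (σ k)) ∧ (∀ k ω, k ≤ σ k ω) ∧
      ∀ ω, (∃ C, ∀ k, |y k ω| ≤ C) →
        Tendsto (fun k => y (σ k ω) ω) atTop (𝓝 (limsup (fun k => y k ω) atTop)) := by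
  classical
  set L : Ω → ℝ := fun ω => limsup (fun k => y k ω) atTop
  have hLm : Measurable L := Measurable.limsup hy
  let q : ℕ → Ω → ℕ → Prop := fun k ω n => k ≤ n ∧ |y n ω - L ω| < 1 / ((k : ℝ) + 1)
  have hq : ∀ k n, MeasurableSet {ω | q k ω n} := fun k n =>
    (MeasurableSet.const _).inter
      (measurableSet_lt (continuous_abs.measurable.comp ((hy n).sub hLm)) measurable_const)
  let p : ℕ → Ω → ℕ → Prop := fun k ω n => k ≤ n ∧ ((∃ j, q k ω j) → q k ω n)
  have hp : ∀ k ω, ∃ n, p k ω n := by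
    intro k ω
    by_cases h : ∃ j, q k ω j
    · obtain ⟨j, hj⟩ := h
      exact ⟨j, hj.1, fun _ => hj⟩
    · exact ⟨k, le_rfl, fun h' => absurd h' h⟩
  have hpm : ∀ k n, MeasurableSet {ω | p k ω n} := by
    intro k n
    refine (MeasurableSet.const _).inter (MeasurableSet.imp ?_ (hq k n))
    rw [Set.ofPred_exists]
    exact MeasurableSet.iUnion (hq k)
  refine ⟨fun k ω => Nat.find (hp k ω), fun k => measurable_find (hp k) (hpm k),
    fun k ω => (Nat.find_spec (hp k ω)).1, ?_⟩
  rintro ω ⟨C, hC⟩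
  have hb : IsBoundedUnder (· ≤ ·) atTop (fun k => y k ω) :=
    isBoundedUnder_of ⟨C, fun k => (abs_le.1 (hC k)).2⟩
  have hb' : IsBoundedUnder (· ≥ ·) atTop (fun k => y k ω) :=
    isBoundedUnder_of ⟨-C, fun k => (abs_le.1 (hC k)).1⟩
  have hcl : MapClusterPt (L ω) atTop (fun k => y k ω) :=
    MapClusterPt.limsup hb'.isCoboundedUnder_le hb
  rw [tendsto_iff_dist_tendsto_zero]
  refine squeeze_zero (fun _ => dist_nonneg) (fun k => ?_) tendsto_one_div_add_atTop_nhds_zero_nat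
  have hex : ∃ j, q k ω j := by
    have hfr := hcl.frequently (Metric.ball_mem_nhds (L ω) (Nat.one_div_pos_of_nat (n := k)))
    obtain ⟨j, hj, hj'⟩ := frequently_atTop.1 hfr k
    exact ⟨j, hj, by simpa [Real.dist_eq] using hj'⟩
  rw [Real.dist_eq]
  exact ((Nat.find_spec (hp k ω)).2 hex).2.le

/-- Successive extraction along an increasing family of σ-algebras: the `i`-th limit is
measurable with respect to the `i`-th σ-algebra. -/
lemma exists_subseq_tendsto_of_monotone_measurableSpace {Ω : Type*}
    {G : ℕ → MeasurableSpace Ω} (hG : Monotone G) (y : ℕ → ℕ → Ω → ℝ)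
    (hy : ∀ i k, Measurable[G i] (y i k)) (n : ℕ) :
    ∃ (σ : ℕ → Ω → ℕ) (z : ℕ → Ω → ℝ), (∀ k, Measurable[G n] (σ k)) ∧ (∀ k ω, k ≤ σ k ω) ∧
      (∀ i, Measurable[G i] (z i)) ∧
      ∀ ω, (∀ i, ∃ C, ∀ k, |y i k ω| ≤ C) →
        ∀ i < n, Tendsto (fun k => y i (σ k ω) ω) atTop (𝓝 (z i ω)) := by
  induction n with
  | zero =>
    exact ⟨fun k _ => k, fun _ _ => 0, fun k => measurable_const, fun k ω => le_rfl,
      fun i => measurable_const, fun ω _ i hi => absurd hi (Nat.not_lt_zero i)⟩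
  | succ n ih =>
    obtain ⟨σ, z, hσ, hσk, hz, hlim⟩ := ih
    have hy' : ∀ k, Measurable[G n] fun ω => y n (σ k ω) ω := fun k =>
      measurable_randomIndex (m := G n) (hy n) (hσ k)
    obtain ⟨ρ, hρ, hρk, hρlim⟩ :=
      exists_measurable_subseq_tendsto_limsup (m := G n) (fun k ω => y n (σ k ω) ω) hy'
    refine ⟨fun k ω => σ (ρ k ω) ω,
      Function.update z n fun ω => limsup (fun k => y n (σ k ω) ω) atTop, fun k => ?_,
      fun k ω => (hρk k ω).trans (hσk _ ω), fun i => ?_, fun ω hω i hi => ?_⟩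
    · exact (measurable_randomIndex (m := G n) hσ (hρ k)).mono (hG n.le_succ) le_rfl
    · rcases eq_or_ne i n with rfl | hin
      · rw [Function.update_self]
        exact Measurable.limsup hy'
      · rw [Function.update_of_ne hin]
        exact hz i
    · rcases eq_or_ne i n with rfl | hin
      · rw [Function.update_self]
        obtain ⟨C, hC⟩ := hω i
        exact hρlim ω ⟨C, fun k => hC _⟩
      · rw [Function.update_of_ne hin]
        exact (hlim ω hω i (by omega)).comp (tendsto_atTop_mono (hρk · ω) tendsto_id)

/-- An adapted, pointwise bounded sequence of strategies has an adapted cluster point. -/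
lemma exists_adaptedStrat_tendsto {Ω : Type*} {T d : ℕ}
    {ℱ : Fin T → MeasurableSpace Ω} (hℱ : Monotone ℱ) (Y : ℕ → Ω → Fin T → Fin d → ℝ)
    (hY : ∀ k, AdaptedStrat ℱ (Y k)) :
    ∃ (σ : ℕ → Ω → ℕ) (z : Ω → Fin T → Fin d → ℝ), AdaptedStrat ℱ z ∧ (∀ k ω, k ≤ σ k ω) ∧
      ∀ ω, (∀ s, ∃ C, ∀ k, ‖Y k ω s‖ ≤ C) →
        Tendsto (fun k => Y (σ k ω) ω) atTop (𝓝 (z ω)) := by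
  rcases Nat.eq_zero_or_pos T with rfl | hT
  · exact ⟨fun k _ => k, fun _ => 0, fun t => t.elim0, fun _ _ => le_rfl,
      fun ω _ => tendsto_pi_nhds.2 fun t => t.elim0⟩
  rcases Nat.eq_zero_or_pos d with rfl | hd
  · exact ⟨fun k _ => k, fun _ => 0, fun t => measurable_const, fun _ _ => le_rfl,
      fun ω _ => tendsto_pi_nhds.2 fun t => tendsto_pi_nhds.2 fun j => j.elim0⟩
  let a : ℕ → Fin T := fun i => ⟨min (i / d) (T - 1), by omega⟩
  let b : ℕ → Fin d := fun i => ⟨i % d, Nat.mod_lt _ hd⟩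
  have ha : Monotone a := fun i j hij =>
    Fin.mk_le_mk.2 (min_le_min_right _ (Nat.div_le_div_right hij))
  let c : Fin T → Fin d → ℕ := fun s j => s * d + j
  have hac : ∀ s j, a (c s j) = s := by
    intro s j
    have h : (s * d + j : ℕ) / d = s := by
      rw [mul_comm, Nat.mul_add_div hd, Nat.div_eq_of_lt j.2, add_zero]
    ext
    simp only [a, c, h]
    omega
  have hbc : ∀ s j, b (c s j) = j := by
    intro s j
    ext
    simp [b, c, Nat.mod_eq_of_lt j.2]
  have hc : ∀ s j, c s j < T * d := by
    intro s j
    calc (s * d + j : ℕ) < s * d + d := by omega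
      _ = (s + 1) * d := by ring
      _ ≤ T * d := Nat.mul_le_mul_right d s.2
  obtain ⟨σ, z, -, hσk, hz, hlim⟩ := exists_subseq_tendsto_of_monotone_measurableSpace
    (G := fun i => ℱ (a i)) (hℱ.comp ha) (fun i k ω => Y k ω (a i) (b i))
    (fun i k => (measurable_pi_apply (b i)).comp (hY k (a i))) (T * d)
  refine ⟨σ, fun ω s j => z (c s j) ω, fun s => ?_, hσk, fun ω hω => ?_⟩
  · refine @measurable_pi_lambda _ _ _ (ℱ s) _ _ fun j => ?_
    have hzc : Measurable[ℱ (a (c s j))] (z (c s j)) := hz (c s j)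
    rwa [hac] at hzc
  · refine tendsto_pi_nhds.2 fun s => tendsto_pi_nhds.2 fun j => ?_
    have := hlim ω (fun i => ?_) (c s j) (hc s j)
    · simpa only [hac, hbc] using this
    · obtain ⟨C, hC⟩ := hω (a i)
      exact ⟨C, fun k => (norm_le_pi_norm (Y k ω (a i)) (b i)).trans (hC k)⟩

/-- A family of measurable functions all of whose sequences are almost surely bounded above
admits a measurable almost sure upper bound. -/
lemma exists_measurable_ae_upperBound {Ω : Type*} {m : MeasurableSpace Ω} (P : Measure Ω)
    [IsFiniteMeasure P] (S : Set (Ω → ℝ)) (hS : ∀ g ∈ S, Measurable g)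
    (hbdd : ∀ u : ℕ → Ω → ℝ, (∀ n, u n ∈ S) →
      ∀ᵐ ω ∂P, BddAbove (Set.range fun n => u n ω)) :
    ∃ M : Ω → ℝ, Measurable M ∧ ∀ g ∈ S, ∀ᵐ ω ∂P, g ω ≤ M ω := by
  rcases S.eq_empty_or_nonempty with rfl | ⟨g₀, hg₀⟩
  · exact ⟨0, measurable_const, by simp⟩
  let h : ℝ → ℝ≥0∞ := fun x => ENNReal.ofReal (Real.arctan x + Real.pi / 2)
  have hpos : ∀ x, 0 < Real.arctan x + Real.pi / 2 := fun x => by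
    linarith [Real.neg_pi_div_two_lt_arctan x]
  have hmono : StrictMono h := fun x y hxy =>
    (ENNReal.ofReal_lt_ofReal_iff (hpos y)).2 (by linarith [Real.arctan_strictMono hxy])
  have hm : Measurable h := hmono.monotone.measurable
  have hle : ∀ x, h x ≤ ENNReal.ofReal Real.pi := fun x =>
    ENNReal.ofReal_le_ofReal (by linarith [Real.arctan_lt_pi_div_two x])
  let Φ : (ℕ → Ω → ℝ) → ℝ≥0∞ := fun u => ∫⁻ ω, ⨆ n, h (u n ω) ∂P
  let W : Set ℝ≥0∞ := Φ '' {u | ∀ n, u n ∈ S}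
  obtain ⟨w, -, hw, hwW⟩ := exists_seq_tendsto_sSup (S := W)
    ⟨_, fun _ => g₀, fun _ => hg₀, rfl⟩ (OrderTop.bddAbove _)
  choose v hvS hv using hwW
  let u : ℕ → Ω → ℝ := fun n => v n.unpair.1 n.unpair.2
  have huS : ∀ n, u n ∈ S := fun n => hvS _ _
  have hΦu : sSup W ≤ Φ u := by
    refine le_of_tendsto' hw fun n => ?_
    rw [← hv n]
    refine lintegral_mono fun ω => iSup_le fun k => ?_
    refine le_iSup_of_le (Nat.pair n k) ?_
    simp [u]
  have hfin : Φ u ≠ ⊤ := by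
    refine ((lintegral_mono fun ω => iSup_le fun n => hle (u n ω)).trans_lt ?_).ne
    rw [lintegral_const]
    exact ENNReal.mul_lt_top ENNReal.ofReal_lt_top (measure_lt_top P _)
  refine ⟨fun ω => ⨆ n, u n ω, Measurable.iSup fun n => hS _ (huS n), fun g hg => ?_⟩
  let u' : ℕ → Ω → ℝ := fun n => Nat.casesOn n g u
  have hu'S : ∀ n, u' n ∈ S := fun n => by
    cases n with
    | zero => exact hg
    | succ n => exact huS n
  have hmem : Φ u' ∈ W := ⟨u', hu'S, rfl⟩
  have heq := ae_eq_of_ae_le_of_lintegral_le (μ := P) (f := fun ω => ⨆ n, h (u n ω))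
    (g := fun ω => ⨆ n, h (u' n ω))
    (Eventually.of_forall fun ω => iSup_le fun n => le_iSup (fun n => h (u' n ω)) (n + 1)) hfin
    (Measurable.iSup fun n => hm.comp (hS _ (hu'S n))).aemeasurable
    ((le_sSup hmem).trans hΦu)
  filter_upwards [heq, hbdd u huS] with ω hω hb
  refine hmono.le_iff_le.1 ?_
  calc h (g ω) ≤ ⨆ n, h (u' n ω) := le_iSup (fun n => h (u' n ω)) 0
    _ = ⨆ n, h (u n ω) := hω.symm
    _ ≤ h (⨆ n, u n ω) := iSup_le fun n => hmono.monotone (le_ciSup hb n)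

/-- If every term is bounded by a multiple of `c` plus the sum of the preceding terms, then every
term is bounded by a multiple of `c`. -/
lemma exists_le_mul_of_le_mul_add_sum_Iio {ι : Type*} {T : ℕ} (a : ι → Fin T → ℝ) (c : ι → ℝ)
    (hc : ∀ n, 0 ≤ c n) (ha : ∀ n s, 0 ≤ a n s)
    (h : ∀ s, ∃ K, ∀ n, a n s ≤ K * (c n + ∑ r ∈ Finset.Iio s, a n r)) (s : Fin T) :
    ∃ C, ∀ n, a n s ≤ C * c n := by
  induction s using WellFoundedLT.induction with
  | ind s ih =>
    have ih' : ∀ r, ∃ C, r < s → ∀ n, a n r ≤ C * c n := fun r => by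
      by_cases hr : r < s
      · obtain ⟨C, hC⟩ := ih r hr
        exact ⟨C, fun _ => hC⟩
      · exact ⟨0, fun h' => absurd h' hr⟩
    choose C hC using ih'
    obtain ⟨K, hK⟩ := h s
    refine ⟨|K| * (1 + ∑ r ∈ Finset.Iio s, C r), fun n => (hK n).trans ?_⟩
    have hsum : ∑ r ∈ Finset.Iio s, a n r ≤ (∑ r ∈ Finset.Iio s, C r) * c n := by
      rw [Finset.sum_mul]
      exact Finset.sum_le_sum fun r hr => hC r (Finset.mem_Iio.1 hr) n
    have hnn : 0 ≤ c n + ∑ r ∈ Finset.Iio s, a n r :=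
      add_nonneg (hc n) (Finset.sum_nonneg fun r _ => ha n r)
    calc K * (c n + ∑ r ∈ Finset.Iio s, a n r)
        ≤ |K| * (c n + ∑ r ∈ Finset.Iio s, a n r) :=
          mul_le_mul_of_nonneg_right (le_abs_self K) hnn
      _ ≤ |K| * (c n + (∑ r ∈ Finset.Iio s, C r) * c n) := by gcongr
      _ = |K| * (1 + ∑ r ∈ Finset.Iio s, C r) * c n := by ring

/-- Limits of positions with value bounded below, rescaled by factors tending to infinity, are
recession directions. -/
lemma recessionModel_nonneg_of_tendsto {Ω : Type*} {T d : ℕ}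
    {V : Ω → (Fin T → Fin d → ℝ) → EReal} {ω : Ω} {x : ℕ → Fin T → Fin d → ℝ} {r : ℕ → ℝ}
    {c : ℝ} {z : Fin T → Fin d → ℝ} (hr : Tendsto r atTop atTop)
    (hx : ∀ k, (c : EReal) ≤ V ω (x k))
    (hz : Tendsto (fun k => (r k)⁻¹ • x k) atTop (𝓝 z)) : 0 ≤ recessionModel V ω z := by
  refine le_iInf fun l => ?_
  by_contra! hlt
  obtain ⟨q, hq, hq0⟩ := EReal.lt_iff_exists_real_btwn.1 hlt
  have hq0 : q < 0 := by exact_mod_cast hq0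
  have hlim : Tendsto (fun k => (r k)⁻¹ * c) atTop (𝓝 0) := by
    simpa using (tendsto_inv_atTop_zero.comp hr).mul_const c
  have hdist : ∀ᶠ k in atTop, ‖(r k)⁻¹ • x k - z‖ < 1 / l.1 := by
    filter_upwards [hz.eventually (Metric.ball_mem_nhds z (one_div_pos.2 l.2))] with k hk
    rwa [← dist_eq_norm]
  obtain ⟨k, hkl, hkq, hkd⟩ :=
    ((hr.eventually_gt_atTop l.1).and ((hlim.eventually_const_lt hq0).and hdist)).exists
  have hrk : 0 < r k := l.2.trans hkl
  refine absurd hq (not_lt.2 ?_)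
  calc (q : EReal) ≤ (((r k)⁻¹ * c : ℝ) : EReal) := by exact_mod_cast hkq.le
    _ = (((r k)⁻¹ : ℝ) : EReal) * c := EReal.coe_mul _ _
    _ ≤ (((r k)⁻¹ : ℝ) : EReal) * V ω (r k • ((r k)⁻¹ • x k)) := by
      rw [smul_inv_smul₀ hrk.ne']
      exact mul_le_mul_of_nonneg_left (hx k) (by exact_mod_cast (inv_pos.2 hrk).le)
    _ ≤ _ := by
      refine le_iSup_of_le (ι := {δ : ℝ // l.1 < δ}) ⟨r k, hkl⟩ ?_
      exact le_iSup (fun y : {y : Fin T → Fin d → ℝ // ‖y - z‖ < 1 / l.1} =>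
        (((r k)⁻¹ : ℝ) : EReal) * V ω (r k • y.1)) ⟨(r k)⁻¹ • x k, hkd⟩

/-- Under no arbitrage, each position along a sequence of adapted strategies with value bounded
below is controlled by the preceding positions. -/
lemma NAcond.ae_exists_norm_le_mul_one_add_sum_Iio {Ω : Type*} {mΩ : MeasurableSpace Ω}
    {P : Measure Ω} {T d : ℕ} {ℱ : Fin T → MeasurableSpace Ω} (hℱmono : Monotone ℱ)
    {V : Ω → (Fin T → Fin d → ℝ) → EReal} (hV0 : ∀ᵐ ω ∂P, V ω 0 = 0) (hNA : NAcond P ℱ V)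
    {f : Ω → ℝ} {ϑ : ℕ → Ω → Fin T → Fin d → ℝ} (hϑ : ∀ n, AdaptedStrat ℱ (ϑ n))
    (hf : ∀ᵐ ω ∂P, ∀ n, (f ω : EReal) ≤ V ω (ϑ n ω)) (t : Fin T) :
    ∀ᵐ ω ∂P, ∃ K, ∀ n, ‖ϑ n ω t‖ ≤ K * (1 + ∑ r ∈ Finset.Iio t, ‖ϑ n ω r‖) := by
  classical
  induction t using WellFoundedGT.induction with
  | ind t ih =>
    let q : ℕ → Ω → ℕ → Prop := fun k ω n =>
      ((k : ℝ) + 1) * (1 + ∑ r ∈ Finset.Iio t, ‖ϑ n ω r‖) < ‖ϑ n ω t‖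
    have hq : ∀ k n, MeasurableSet[ℱ t] {ω | q k ω n} := by
      intro k n
      have hnorm : ∀ r ≤ t, Measurable[ℱ t] fun ω => ‖ϑ n ω r‖ := fun r hr =>
        measurable_norm.comp ((hϑ n r).mono (hℱmono hr) le_rfl)
      refine measurableSet_lt (mδ := ℱ t) ?_ (hnorm t le_rfl)
      refine Measurable.const_mul (Measurable.const_add ?_ _) _
      exact Finset.measurable_fun_sum _ fun r hr => hnorm r (Finset.mem_Iio.1 hr).le
    have hqex : ∀ k, MeasurableSet[ℱ t] {ω | ∃ n, q k ω n} := fun k => by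
      rw [Set.ofPred_exists]
      exact @MeasurableSet.iUnion _ _ (ℱ t) _ _ (hq k)
    let A : Set Ω := {ω | ∀ k, ∃ n, q k ω n}
    have hA : MeasurableSet[ℱ t] A := by
      simp only [A, Set.ofPred_forall]
      exact @MeasurableSet.iInter _ _ (ℱ t) _ _ hqex
    have hp : ∀ k ω, ∃ n, (∃ j, q k ω j) → q k ω n := fun k ω => by
      by_cases h : ∃ j, q k ω j
      · obtain ⟨j, hj⟩ := h
        exact ⟨j, fun _ => hj⟩
      · exact ⟨0, fun h' => absurd h' h⟩
    let τ : ℕ → Ω → ℕ := fun k ω => Nat.find (hp k ω)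
    have hτ : ∀ k, Measurable[ℱ t] (τ k) := fun k =>
      @measurable_find _ (ℱ t) _ _ (hp k) fun n =>
        @MeasurableSet.imp _ (ℱ t) _ _ (hqex k) (hq k n)
    have hτq : ∀ ω ∈ A, ∀ k : ℕ, q k ω (τ k ω) := fun ω hω k => Nat.find_spec (hp k ω) (hω k)
    let x : ℕ → Ω → Fin T → Fin d → ℝ := fun k ω => ϑ (τ k ω) ω
    have hx : ∀ k, ∀ s ≥ t, Measurable[ℱ s] fun ω => x k ω s := fun k s hs =>
      @measurable_randomIndex _ _ (ℱ s) _ (fun n ω => ϑ n ω s) (fun n => hϑ n s) _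
        ((hτ k).mono (hℱmono hs) le_rfl)
    let Y : ℕ → Ω → Fin T → Fin d → ℝ := fun k ω s =>
      if t ≤ s then A.indicator (fun ω => ‖x k ω t‖⁻¹ • x k ω s) ω else 0
    have hY : ∀ k, AdaptedStrat ℱ (Y k) := by
      intro k s
      by_cases hs : t ≤ s
      · simp only [Y, hs, if_true]
        refine Measurable.indicator ?_ (hℱmono hs A hA)
        have hinv : Measurable[ℱ s] fun ω => ‖x k ω t‖⁻¹ :=
          (measurable_norm.comp ((hx k t le_rfl).mono (hℱmono hs) le_rfl)).inv
        exact hinv.smul (hx k s hs)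
      · simp only [Y, hs, if_false]
        exact measurable_const
    obtain ⟨σ, z, hz, hσ, hlim⟩ := exists_adaptedStrat_tendsto hℱmono Y hY
    have hlt : ∀ ω ∈ A, ∀ k : ℕ, (k : ℝ) + 1 < ‖x k ω t‖ := fun ω hω k => by
      refine lt_of_le_of_lt ?_ (hτq ω hω k)
      exact le_mul_of_one_le_right (by positivity)
        (le_add_of_nonneg_right (Finset.sum_nonneg fun r _ => norm_nonneg _))
    have hpast : ∀ ω ∈ A, ∀ k : ℕ, ∀ s < t, ((k : ℝ) + 1) * ‖x k ω s‖ ≤ ‖x k ω t‖ := by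
      intro ω hω k s hs
      refine le_trans ?_ (hτq ω hω k).le
      refine mul_le_mul_of_nonneg_left ?_ (by positivity)
      have := Finset.single_le_sum (f := fun r => ‖x k ω r‖) (fun r _ => norm_nonneg _)
        (Finset.mem_Iio.2 hs)
      linarith
    have hYA : ∀ ω ∈ A, ∀ (k : ℕ) (s : Fin T), t ≤ s → Y k ω s = ‖x k ω t‖⁻¹ • x k ω s := fun ω hω k s hs => by
      simp [Y, hs, hω]
    have hYt : ∀ ω ∈ A, ∀ k : ℕ, ‖Y k ω t‖ = 1 := fun ω hω k => by
      have hk : (0 : ℝ) < ‖x k ω t‖ := lt_trans (by positivity) (hlt ω hω k)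
      rw [hYA ω hω k t le_rfl, norm_smul, norm_inv, norm_norm, inv_mul_cancel₀ hk.ne']
    have hYz : ∀ᵐ ω ∂P, Tendsto (fun k => Y (σ k ω) ω) atTop (𝓝 (z ω)) := by
      have ih' : ∀ᵐ ω ∂P, ∀ s, t < s →
          ∃ K, ∀ n, ‖ϑ n ω s‖ ≤ K * (1 + ∑ r ∈ Finset.Iio s, ‖ϑ n ω r‖) := by
        refine ae_all_iff.2 fun s => ?_
        by_cases hs : t < s
        · filter_upwards [ih s hs] with ω hω _ using hω
        · exact Eventually.of_forall fun ω h => absurd h hs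
      filter_upwards [ih'] with ω hω
      refine hlim ω fun s => ?_
      by_cases hωA : ω ∈ A
      · have hone : ∀ k, 1 ≤ ‖x k ω t‖ := fun k =>
          le_trans (by simp) (hlt ω hωA k).le
        have hsum : ∀ k s, 0 ≤ ∑ r ∈ Finset.Iio s, ‖x k ω r‖ := fun k s =>
          Finset.sum_nonneg fun r _ => norm_nonneg _
        obtain ⟨C, hC⟩ := exists_le_mul_of_le_mul_add_sum_Iio (fun k s => ‖x k ω s‖)
          (fun k => ‖x k ω t‖) (fun k => norm_nonneg _) (fun k s => norm_nonneg _) (fun s => by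
            rcases lt_trichotomy s t with hs | rfl | hs
            · refine ⟨1, fun k => ?_⟩
              have h1 := hpast ω hωA k s hs
              have h2 := hsum k s
              have h3 : 0 ≤ (k : ℝ) * ‖x k ω s‖ := by positivity
              linarith
            · exact ⟨1, fun k => by linarith [hsum k s]⟩
            · obtain ⟨K, hK⟩ := hω s hs
              refine ⟨|K|, fun k => (hK (τ k ω)).trans ?_⟩
              refine (mul_le_mul_of_nonneg_right (le_abs_self K) ?_).trans
                (mul_le_mul_of_nonneg_left ?_ (abs_nonneg K))
              · exact add_nonneg zero_le_one (hsum k s)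
              · exact add_le_add_left (hone k) _) s
        refine ⟨max C 0, fun k => ?_⟩
        by_cases hs : t ≤ s
        · rw [hYA ω hωA k s hs, norm_smul, norm_inv, norm_norm, inv_mul_le_iff₀
            (zero_lt_one.trans_le (hone k)), mul_comm]
          exact (hC k).trans (mul_le_mul_of_nonneg_right (le_max_left _ _) (norm_nonneg _))
        · simp [Y, hs]
      · exact ⟨0, fun k => by simp [Y, hωA]⟩
    have hrec : ∀ᵐ ω ∂P, 0 ≤ recessionModel V ω (z ω) := by
      filter_upwards [hYz, hf, hV0] with ω hω hfω h0
      by_cases hωA : ω ∈ A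
      · have hσt : Tendsto (fun k => σ k ω) atTop atTop :=
          tendsto_atTop_mono (hσ · ω) tendsto_id
        have hxt : Tendsto (fun k => ‖x k ω t‖) atTop atTop :=
          tendsto_atTop_mono (fun k => le_trans (by simp) (hlt ω hωA k).le)
            tendsto_natCast_atTop_atTop
        refine recessionModel_nonneg_of_tendsto (x := fun k => x (σ k ω) ω) (c := f ω)
          (hxt.comp hσt) (fun k => hfω _) (tendsto_pi_nhds.2 fun s => ?_)
        have hs' := (tendsto_pi_nhds.1 hω) s
        by_cases hs : t ≤ s
        · exact hs'.congr fun k => hYA ω hωA _ s hs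
        · have hzs : z ω s = 0 :=
            tendsto_nhds_unique hs' (tendsto_const_nhds.congr fun k => by simp [Y, hs])
          rw [hzs]
          have hsmall : Tendsto (fun k => ‖x k ω t‖⁻¹ • x k ω s) atTop (𝓝 0) := by
            refine squeeze_zero_norm (fun k => ?_) tendsto_one_div_add_atTop_nhds_zero_nat
            have hk : (0 : ℝ) < ‖x k ω t‖ := lt_trans (by positivity) (hlt ω hωA k)
            rw [norm_smul, norm_inv, norm_norm, inv_mul_le_iff₀ hk, mul_one_div,
              le_div_iff₀ (by positivity), mul_comm]
            exact hpast ω hωA k s (not_le.1 hs)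
          exact hsmall.comp hσt
      · have hz0 : z ω = 0 := by
          refine tendsto_nhds_unique hω (tendsto_const_nhds.congr fun k => ?_)
          ext s j
          simp [Y, hωA]
        rw [hz0]
        exact recessionModel_nonneg_of_tendsto (x := fun _ => 0) (c := 0)
          tendsto_natCast_atTop_atTop (fun _ => by simp [h0]) (by simp)
    filter_upwards [hYz, hNA z hz hrec] with ω hω hz0
    have hωA : ω ∉ A := by
      intro hωA
      have h1 : Tendsto (fun k => ‖Y (σ k ω) ω t‖) atTop (𝓝 ‖z ω t‖) :=
        ((tendsto_pi_nhds.1 hω) t).norm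
      simp [hYt ω hωA, hz0] at h1
    simp only [A, q, Set.mem_ofPred_eq, not_forall, not_exists, not_lt] at hωA
    obtain ⟨k, hk⟩ := hωA
    exact ⟨_, hk⟩

/-- for a normal integrand market model satisfying NA and a random
variable `f`, there is a finite random variable `M_f` dominating (a.s.) every
superhedgeable claim in `𝒞_f`. -/
theorem stmt12 {Ω : Type*} {mΩ : MeasurableSpace Ω} (P : Measure Ω) [IsProbabilityMeasure P]
    (T d : ℕ) (hT : 1 ≤ T) (hd : 1 ≤ d)
    (ℱ : Fin T → MeasurableSpace Ω) (hℱmono : Monotone ℱ) (hℱle : ∀ t, ℱ t ≤ mΩ)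
    -- V is a normal integrand market model:
    (V : Ω → (Fin T → Fin d → ℝ) → EReal)
    (hVjm : Measurable (Function.uncurry V))
    (hV0 : ∀ᵐ ω ∂P, V ω 0 = 0)
    (hVnotTop : ∀ ω x, V ω x ≠ ⊤)
    (hVusc : ∀ᵐ ω ∂P, UpperSemicontinuous (V ω))
    (hVhypo : HypoClosedMeas (mΩ := mΩ) V)
    -- satisfying the no-arbitrage condition:
    (hNA : NAcond P ℱ V)
    (f : Ω → ℝ) (hf : Measurable f) :
    ∃ Mf : Ω → ℝ, Measurable Mf ∧
      ∀ g : Ω → ℝ, Measurable g →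
        (∃ ϑ, AdaptedStrat ℱ ϑ ∧
          ∀ᵐ ω ∂P, f ω ≤ g ω ∧ (g ω : EReal) ≤ V ω (ϑ ω)) →
        ∀ᵐ ω ∂P, g ω ≤ Mf ω := by
  let S : Set (Ω → ℝ) := {g | Measurable g ∧ ∃ ϑ, AdaptedStrat ℱ ϑ ∧
    ∀ᵐ ω ∂P, f ω ≤ g ω ∧ (g ω : EReal) ≤ V ω (ϑ ω)}
  obtain ⟨M, hM, hMS⟩ := exists_measurable_ae_upperBound P S (fun g hg => hg.1) fun u hu => by
    choose hum ϑ hϑ hle using hu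
    have hle' := ae_all_iff.2 hle
    have hf' : ∀ᵐ ω ∂P, ∀ n, (f ω : EReal) ≤ V ω (ϑ n ω) := by
      filter_upwards [hle'] with ω hω n
      exact (EReal.coe_le_coe_iff.2 (hω n).1).trans (hω n).2
    have hK := ae_all_iff.2
      (NAcond.ae_exists_norm_le_mul_one_add_sum_Iio hℱmono hV0 hNA hϑ hf')
    filter_upwards [hle', hK, hVusc] with ω hω hKω husc
    choose C hC using exists_le_mul_of_le_mul_add_sum_Iio (fun n s => ‖ϑ n ω s‖)
      (fun _ => 1) (fun _ => zero_le_one) (fun n s => norm_nonneg _) hKω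
    have hball : ∀ n, ϑ n ω ∈ Metric.closedBall 0 (∑ s, |C s|) := fun n => by
      rw [mem_closedBall_zero_iff, pi_norm_le_iff_of_nonneg (by positivity)]
      intro s
      refine ((hC s n).trans ((mul_one (C s)).le.trans (le_abs_self _))).trans ?_
      exact Finset.single_le_sum (f := fun s => |C s|) (fun s _ => abs_nonneg _)
        (Finset.mem_univ s)
    obtain ⟨a, -, ha⟩ := (husc.upperSemicontinuousOn _).exists_isMaxOn ⟨_, hball 0⟩
      (isCompact_closedBall _ _)
    refine ⟨(V ω a).toReal, ?_⟩
    rintro _ ⟨n, rfl⟩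
    rw [← EReal.coe_le_coe_iff]
    exact ((hω n).2.trans (ha (hball n))).trans (EReal.le_coe_toReal (hVnotTop ω a))
  exact ⟨M, hM, fun g hg hϑ => hMS g ⟨hg, hϑ⟩⟩

end
end

section
/- Let A : Ω ⇉ ℝ^n be a measurable correspondence with nonempty convex values. Then the correspondence ω ↦ ri A(ω) (the relative interior of A(ω)) is measurable. -/
open MeasureTheory Filter Topology

noncomputable section

/-- A measurable correspondence: `{ω : C(ω) ∩ B ≠ ∅} ∈ 𝓕` for every open ball `B`. -/
def MeasCorr {Ω : Type*} [MeasurableSpace Ω] {E : Type*} [PseudoMetricSpace E]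
    (C : Ω → Set E) : Prop :=
  ∀ (c : E) (r : ℝ), MeasurableSet {ω | (Metric.ball c r ∩ C ω).Nonempty}

/-- A point lies in the intrinsic interior iff it lies in the affine span and some ball around it
meets the affine span inside the set. -/
theorem mem_intrinsicInterior_iff_ball {E : Type*} [NormedAddCommGroup E] [NormedSpace ℝ E]
    {s : Set E} {x : E} :
    x ∈ intrinsicInterior ℝ s ↔ x ∈ affineSpan ℝ s ∧
      ∃ ε > 0, ∀ w ∈ affineSpan ℝ s, dist w x < ε → w ∈ s := by
  rw [mem_intrinsicInterior]
  constructor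
  · rintro ⟨y, hy, rfl⟩
    rw [mem_interior_iff_mem_nhds, Metric.mem_nhds_iff] at hy
    obtain ⟨ε, hε, h⟩ := hy
    exact ⟨y.2, ε, hε, fun w hw hd => h (show (⟨w, hw⟩ : affineSpan ℝ s) ∈ Metric.ball y ε from hd)⟩
  · rintro ⟨hx, ε, hε, h⟩
    refine ⟨⟨x, hx⟩, ?_, rfl⟩
    rw [mem_interior_iff_mem_nhds, Metric.mem_nhds_iff]
    exact ⟨ε, hε, fun w hw => h w w.2 hw⟩

/-- Moving from a point of a convex set towards a point of its intrinsic interior enters the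
intrinsic interior immediately. -/
theorem Convex.lineMap_mem_intrinsicInterior {E : Type*} [NormedAddCommGroup E] [NormedSpace ℝ E]
    {s : Set E} (hs : Convex ℝ s) {x y : E} (hy : y ∈ s) (hx : x ∈ intrinsicInterior ℝ s)
    {t : ℝ} (ht : t ∈ Set.Ioc (0 : ℝ) 1) :
    AffineMap.lineMap y x t ∈ intrinsicInterior ℝ s := by
  obtain ⟨ht0, ht1⟩ := ht
  rw [mem_intrinsicInterior_iff_ball] at hx ⊢
  obtain ⟨hxs, ε, hε, h⟩ := hx
  have hys := subset_affineSpan ℝ s hy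
  refine ⟨AffineMap.lineMap_mem t hys hxs, t * ε, by positivity, fun w hw hd => ?_⟩
  have hu : AffineMap.lineMap y w t⁻¹ ∈ s := by
    refine h _ (AffineMap.lineMap_mem _ hys hw) ?_
    have hsub : AffineMap.lineMap y w t⁻¹ - x = t⁻¹ • (w - AffineMap.lineMap y x t) := by
      simp only [AffineMap.lineMap_apply_module']
      rw [← sub_sub, sub_right_comm w, smul_sub t⁻¹ (w - y), inv_smul_smul₀ ht0.ne']
      abel
    rw [dist_eq_norm, hsub, norm_smul, Real.norm_of_nonneg (by positivity), ← dist_eq_norm,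
      inv_mul_lt_iff₀ ht0]
    exact hd
  have hw' : AffineMap.lineMap y (AffineMap.lineMap y w t⁻¹) t = w := by
    simp [AffineMap.lineMap_apply_module', smul_smul, ht0.ne']
  rw [← hw']
  exact hs.lineMap_mem hy hu ⟨ht0.le, ht1⟩

/-- A convex set in a finite-dimensional space is contained in the closure of its intrinsic
interior. -/
theorem Convex.subset_closure_intrinsicInterior {E : Type*} [NormedAddCommGroup E]
    [NormedSpace ℝ E] [FiniteDimensional ℝ E] {s : Set E} (hs : Convex ℝ s) :
    s ⊆ closure (intrinsicInterior ℝ s) := by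
  intro y hy
  obtain ⟨x, hx⟩ := Set.Nonempty.intrinsicInterior hs ⟨y, hy⟩
  have hlim : Tendsto (fun t : ℝ => AffineMap.lineMap y x t) (𝓝[>] 0) (𝓝 y) := by
    have hc : Continuous fun t : ℝ => (AffineMap.lineMap y x t : E) :=
      AffineMap.lineMap_continuous
    simpa using (hc.tendsto 0).mono_left (nhdsWithin_le_nhds (s := Set.Ioi 0))
  refine mem_closure_of_tendsto hlim ?_
  filter_upwards [Ioc_mem_nhdsGT (zero_lt_one (α := ℝ))] with t ht
  exact hs.lineMap_mem_intrinsicInterior hy hx ht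

/-- for a measurable correspondence `A` with nonempty convex values, the
relative interior correspondence `ω ↦ ri A(ω)` is measurable. -/
theorem stmt18 {Ω : Type*} {mΩ : MeasurableSpace Ω} (P : Measure Ω) [IsProbabilityMeasure P]
    (n : ℕ) (A : Ω → Set (Fin n → ℝ))
    (hAmeas : MeasCorr A)
    (hAne : ∀ ω, (A ω).Nonempty)
    (hAconv : ∀ ω, Convex ℝ (A ω)) :
    MeasCorr (fun ω => intrinsicInterior ℝ (A ω)) := by
  intro c r
  convert hAmeas c r using 3 with ω
  refine ⟨fun h => h.mono (Set.inter_subset_inter_right _ intrinsicInterior_subset), ?_⟩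
  rintro ⟨y, hyb, hyA⟩
  exact mem_closure_iff.1 ((hAconv ω).subset_closure_intrinsicInterior hyA) _
    Metric.isOpen_ball hyb

end
end
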